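/- Let n ≥ 1, d ≥ 1, let P be a polynomial of degree at most d on {-1,1}^n, and let X be uniformly distributed on {-1,1}^n. Then for every real q ≥ 3, (E|P(X)|^q)^{1/q} ≤ √2 · q^{d/2} · (E|P(X)|^2)^{1/2}. -/

import Mathlib

/-!
Bonami's hypercontractive argument, in the form `‖f‖_q² ≤ ∑_S (q - 1)^|S| a_S²` for `q ≥ 2` and
`f = ∑_S a_S ∏_{i ∈ S} x_i`. It is proved one coordinate at a time: if `f` and `g` do not depend
on `x_i`, averaging over the sign of `x_i` and the two-point inequality
`(|a + b|^q + |a - b|^q) / 2 ≤ (a² + (q - 1) b²)^{q/2}` bound `‖f + x_i g‖_q²` by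
`‖f² + (q - 1) g²‖_{q/2}`, and Minkowski's inequality in `L^{q/2}` splits the sum. In degree at most
`d` the weights are at most `(q - 1)^d`, and Parseval's identity concludes.
-/

open Classical

/-- Expectation with respect to the uniform measure on the discrete cube `{-1,1}^n`,
encoded as `Fin n → Bool` (`true ↦ 1`, `false ↦ -1`). -/
noncomputable def cubeE (n : ℕ) (f : (Fin n → Bool) → ℝ) : ℝ :=
  (∑ x : Fin n → Bool, f x) / 2 ^ n

/-- The real value of a coordinate of the cube: `true ↦ 1`, `false ↦ -1`. -/
def cubeSign (b : Bool) : ℝ := if b then 1 else -1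

/-- `P` is (the restriction to the cube of) a multilinear polynomial of degree at most `d`:
`P x = ∑_{#S ≤ d} a_S ∏_{i ∈ S} x_i`. -/
def IsPolyDeg (n d : ℕ) (P : (Fin n → Bool) → ℝ) : Prop :=
  ∃ a : Finset (Fin n) → ℝ,
    (∀ S : Finset (Fin n), d < S.card → a S = 0) ∧
    ∀ x, P x = ∑ S : Finset (Fin n), a S * ∏ i ∈ S, cubeSign (x i)

/-- Probability (uniform measure) of a set of points of the cube. -/
noncomputable def cubePr (n : ℕ) (A : Set (Fin n → Bool)) : ℝ :=
  (∑ x : Fin n → Bool, if x ∈ A then (1 : ℝ) else 0) / 2 ^ n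

/-- `a` is an `e^{-r}`-quantile of `P(X)`:
`ℙ(P(X) ≥ a) ≥ e^{-r}` and `ℙ(P(X) ≤ a) ≥ 1 - e^{-r}`. -/
def IsQuantile (n : ℕ) (P : (Fin n → Bool) → ℝ) (r a : ℝ) : Prop :=
  Real.exp (-r) ≤ cubePr n {x | a ≤ P x} ∧ 1 - Real.exp (-r) ≤ cubePr n {x | P x ≤ a}

/-- Discrete partial derivative: `∂_i f(x) = (f(T_i^1 x) - f(T_i^{-1} x))/2`. -/
noncomputable def discDeriv (n : ℕ) (f : (Fin n → Bool) → ℝ) (i : Fin n)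
    (x : Fin n → Bool) : ℝ :=
  (f (Function.update x i true) - f (Function.update x i false)) / 2

/-- Squared norm of the discrete gradient: `|∇f(x)|² = ∑_i |∂_i f(x)|²`. -/
noncomputable def gradSq (n : ℕ) (f : (Fin n → Bool) → ℝ) (x : Fin n → Bool) : ℝ :=
  ∑ i : Fin n, (discDeriv n f i x) ^ 2

section TwoPointInequality

-- Compare the Taylor series termwise: all coefficients are nonnegative, and `p ≤ p ^ (2 * k + 1)`.
lemma mul_log_one_add_sub_log_one_sub_le {p y : ℝ} (hp : 1 ≤ p) (hy : 0 ≤ y) (hpy : p * y < 1) :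
    p * (Real.log (1 + y) - Real.log (1 - y)) ≤ Real.log (1 + p * y) - Real.log (1 - p * y) := by
  have hy_lt : |y| < 1 := by rw [abs_of_nonneg hy]; nlinarith
  have hpy_lt : |p * y| < 1 := by rwa [abs_of_nonneg (by positivity)]
  refine hasSum_le (fun k => ?_) ((Real.hasSum_log_sub_log_of_abs_lt_one hy_lt).mul_left p)
    (Real.hasSum_log_sub_log_of_abs_lt_one hpy_lt)
  calc p * (2 * (1 / (2 * k + 1)) * y ^ (2 * k + 1))
      ≤ p ^ (2 * k + 1) * (2 * (1 / (2 * k + 1)) * y ^ (2 * k + 1)) := by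
        gcongr
        exact le_self_pow₀ hp (by lia)
    _ = 2 * (1 / (2 * k + 1)) * (p * y) ^ (2 * k + 1) := by ring

lemma one_add_rpow_mul_one_sub_mul_le {p y : ℝ} (hp : 1 ≤ p) (hy : 0 ≤ y) (hy1 : y < 1) :
    (1 + y) ^ p * (1 - p * y) ≤ (1 - y) ^ p * (1 + p * y) := by
  have hadd : 0 < 1 + y := by linarith
  have hsub : 0 < 1 - y := by linarith
  rcases lt_or_ge (p * y) 1 with hpy | hpy
  · have hadd' : 0 < 1 + p * y := by positivity
    have hsub' : 0 < 1 - p * y := by linarith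
    rw [← Real.log_le_log_iff (by positivity) (by positivity),
      Real.log_mul (by positivity) hsub'.ne', Real.log_mul (by positivity) hadd'.ne',
      Real.log_rpow hadd, Real.log_rpow hsub]
    linarith [mul_log_one_add_sub_log_one_sub_le hp hy hpy]
  · calc (1 + y) ^ p * (1 - p * y) ≤ 0 :=
          mul_nonpos_of_nonneg_of_nonpos (by positivity) (by linarith)
      _ ≤ (1 - y) ^ p * (1 + p * y) := by positivity

/-- The ratio of the two sides of the two-point inequality for the pair `(1, z)`, up to a
factor `2`; the inequality says that it is maximal at `z = 0`. -/
noncomputable def twoPointRatio (q z : ℝ) : ℝ :=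
  ((1 + z) ^ q + (1 - z) ^ q) * (1 + (q - 1) * z ^ 2) ^ (-(q / 2))

variable {q : ℝ}

lemma one_add_sub_one_mul_sq_pos (hq : 1 ≤ q) (z : ℝ) : 0 < 1 + (q - 1) * z ^ 2 := by
  have : 0 ≤ q - 1 := by linarith
  positivity

lemma continuous_twoPointRatio (hq : 1 ≤ q) : Continuous (twoPointRatio q) := by
  have hq0 : 0 ≤ q := by linarith
  refine ((Continuous.rpow_const (by fun_prop) fun _ => Or.inr hq0).add
    (Continuous.rpow_const (by fun_prop) fun _ => Or.inr hq0)).mul ?_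
  exact Continuous.rpow_const (by fun_prop) fun z => Or.inl (one_add_sub_one_mul_sq_pos hq z).ne'

lemma hasDerivAt_twoPointRatio (hq : 1 ≤ q) {z : ℝ} (hz : z ∈ Set.Ioo (-1) 1) :
    HasDerivAt (twoPointRatio q)
      (q * (1 + (q - 1) * z ^ 2) ^ (-(q / 2) - 1) *
        ((1 + z) ^ (q - 1) * (1 - (q - 1) * z) - (1 - z) ^ (q - 1) * (1 + (q - 1) * z))) z := by
  have hadd : 1 + z ≠ 0 := by linarith [hz.1]
  have hsub : 1 - z ≠ 0 := by linarith [hz.2]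
  have hquad := (one_add_sub_one_mul_sq_pos hq z).ne'
  have deriv_add : HasDerivAt (fun z : ℝ => 1 + z) 1 z := (hasDerivAt_id z).const_add 1
  have deriv_sub : HasDerivAt (fun z : ℝ => 1 - z) (-1) z := (hasDerivAt_id z).const_sub 1
  have deriv_quad : HasDerivAt (fun z : ℝ => 1 + (q - 1) * z ^ 2) ((q - 1) * (2 * z)) z := by
    simpa using ((hasDerivAt_pow 2 z).const_mul (q - 1)).const_add 1
  refine (((deriv_add.rpow_const (Or.inl hadd)).add (deriv_sub.rpow_const (Or.inl hsub))).mul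
    (deriv_quad.rpow_const (Or.inl hquad))).congr_deriv ?_
  have split_rpow {t : ℝ} (ht : t ≠ 0) (r : ℝ) : t ^ r = t ^ (r - 1) * t := by
    rw [← Real.rpow_add_one ht, sub_add_cancel]
  rw [Pi.add_apply, split_rpow hadd q, split_rpow hsub q, split_rpow hquad (-(q / 2))]
  ring

lemma antitoneOn_twoPointRatio (hq : 2 ≤ q) : AntitoneOn (twoPointRatio q) (Set.Icc 0 1) := by
  have hq1 : 1 ≤ q := by linarith
  have hderiv {z : ℝ} (hz : z ∈ Set.Ioo 0 1) :=
    hasDerivAt_twoPointRatio hq1 (Set.Ioo_subset_Ioo_left (by norm_num) hz)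
  refine antitoneOn_of_deriv_nonpos (convex_Icc 0 1) (continuous_twoPointRatio hq1).continuousOn
    ?_ ?_ <;> rw [interior_Icc] <;> intro z hz
  · exact (hderiv hz).differentiableAt.differentiableWithinAt
  · rw [(hderiv hz).deriv]
    have := one_add_sub_one_mul_sq_pos hq1 z
    refine mul_nonpos_of_nonneg_of_nonpos (by positivity) (sub_nonpos.2 ?_)
    exact one_add_rpow_mul_one_sub_mul_le (by linarith) hz.1.le hz.2

lemma one_add_rpow_add_one_sub_rpow_le (hq : 2 ≤ q) {y : ℝ} (hy : 0 ≤ y) (hy1 : y ≤ 1) :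
    ((1 + y) ^ q + (1 - y) ^ q) / 2 ≤ (1 + (q - 1) * y ^ 2) ^ (q / 2) := by
  have hquad := one_add_sub_one_mul_sq_pos (by linarith : 1 ≤ q) y
  have hratio : twoPointRatio q y ≤ 2 := by
    calc twoPointRatio q y ≤ twoPointRatio q 0 :=
          antitoneOn_twoPointRatio hq (Set.left_mem_Icc.2 zero_le_one) ⟨hy, hy1⟩ hy
      _ = 2 := by norm_num [twoPointRatio]
  rw [twoPointRatio, Real.rpow_neg hquad.le, ← div_eq_mul_inv,
    div_le_iff₀ (by positivity)] at hratio
  linarith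

lemma sq_rpow_div_two (t q : ℝ) : (t ^ 2) ^ (q / 2) = |t| ^ q := by
  rw [Real.rpow_div_two_eq_sqrt _ (sq_nonneg t), Real.sqrt_sq_eq_abs]

lemma add_rpow_add_sub_rpow_le (hq : 2 ≤ q) {a b : ℝ} (hb : 0 ≤ b) (hba : b ≤ a) :
    ((a + b) ^ q + (a - b) ^ q) / 2 ≤ (a ^ 2 + (q - 1) * b ^ 2) ^ (q / 2) := by
  rcases (hb.trans hba).eq_or_lt with rfl | ha
  · obtain rfl : b = 0 := le_antisymm hba hb
    simp [Real.zero_rpow (by linarith : q ≠ 0), Real.zero_rpow (by linarith : q / 2 ≠ 0)]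
  obtain ⟨y, rfl⟩ : ∃ y, b = a * y := ⟨b / a, by field_simp⟩
  have hy : 0 ≤ y := nonneg_of_mul_nonneg_right hb ha
  have hy1 : y ≤ 1 := by nlinarith
  have hquad := one_add_sub_one_mul_sq_pos (by linarith : 1 ≤ q) y
  calc ((a + a * y) ^ q + (a - a * y) ^ q) / 2
      = a ^ q * (((1 + y) ^ q + (1 - y) ^ q) / 2) := by
        rw [← mul_one_add, ← mul_one_sub, Real.mul_rpow ha.le (by linarith),
          Real.mul_rpow ha.le (by linarith)]
        ring
    _ ≤ a ^ q * (1 + (q - 1) * y ^ 2) ^ (q / 2) := by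
        gcongr
        exact one_add_rpow_add_one_sub_rpow_le hq hy hy1
    _ = (a ^ 2 * (1 + (q - 1) * y ^ 2)) ^ (q / 2) := by
        rw [Real.mul_rpow (sq_nonneg a) hquad.le, sq_rpow_div_two, abs_of_pos ha]
    _ = (a ^ 2 + (q - 1) * (a * y) ^ 2) ^ (q / 2) := by ring_nf

theorem abs_add_rpow_add_abs_sub_rpow_le (hq : 2 ≤ q) (a b : ℝ) :
    (|a + b| ^ q + |a - b| ^ q) / 2 ≤ (a ^ 2 + (q - 1) * b ^ 2) ^ (q / 2) := by
  wlog ha : 0 ≤ a generalizing a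
  · have h := this (-a) (by linarith)
    rwa [neg_sq, neg_add_eq_sub, abs_sub_comm b a, ← neg_add', abs_neg, add_comm (|a - b| ^ q)] at h
  wlog hb : 0 ≤ b generalizing b
  · have h := this (-b) (by linarith)
    rwa [neg_sq, sub_neg_eq_add, ← sub_eq_add_neg, add_comm (|a - b| ^ q)] at h
  rw [abs_of_nonneg (add_nonneg ha hb)]
  rcases le_total b a with hba | hab
  · rw [abs_of_nonneg (sub_nonneg.2 hba)]
    exact add_rpow_add_sub_rpow_le hq hb hba
  · rw [abs_of_nonpos (sub_nonpos.2 hab), neg_sub, add_comm a b]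
    refine (add_rpow_add_sub_rpow_le hq ha hab).trans ?_
    have hq1 : 0 ≤ q - 1 := by linarith
    gcongr ?_ ^ _
    nlinarith [mul_nonneg (by linarith : 0 ≤ q - 2) (by nlinarith : 0 ≤ b ^ 2 - a ^ 2)]

end TwoPointInequality

section Expectation

variable {n : ℕ} {f g : (Fin n → Bool) → ℝ}

lemma cubeE_mono (h : ∀ x, f x ≤ g x) : cubeE n f ≤ cubeE n g := by
  unfold cubeE
  gcongr
  exact h _

lemma cubeE_nonneg (h : ∀ x, 0 ≤ f x) : 0 ≤ cubeE n f :=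
  div_nonneg (Finset.sum_nonneg fun x _ => h x) (by positivity)

lemma cubeE_const (n : ℕ) (c : ℝ) : (cubeE n fun _ => c) = c := by
  simp [cubeE]

lemma cubeE_add (f g : (Fin n → Bool) → ℝ) :
    (cubeE n fun x => f x + g x) = cubeE n f + cubeE n g := by
  simp only [cubeE, Finset.sum_add_distrib, add_div]

lemma cubeE_const_mul (c : ℝ) (f : (Fin n → Bool) → ℝ) :
    (cubeE n fun x => c * f x) = c * cubeE n f := by
  simp only [cubeE, ← Finset.mul_sum, mul_div_assoc]

/-- The involution of the cube that changes the sign of the `i`-th coordinate. A function that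
does not depend on this coordinate is expressed below as one invariant under `flipCoord i`. -/
def flipCoord (i : Fin n) : Equiv.Perm (Fin n → Bool) :=
  Function.Involutive.toPerm (fun x => Function.update x i (!x i)) fun x => by simp

lemma flipCoord_apply_self (i : Fin n) (x : Fin n → Bool) : flipCoord i x i = !x i :=
  Function.update_self i _ x

lemma flipCoord_apply_of_ne {i j : Fin n} (h : j ≠ i) (x : Fin n → Bool) :
    flipCoord i x j = x j :=
  Function.update_of_ne h _ x

lemma cubeE_comp_flipCoord (i : Fin n) (f : (Fin n → Bool) → ℝ) :
    (cubeE n fun x => f (flipCoord i x)) = cubeE n f := by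
  rw [cubeE, Equiv.sum_comp (flipCoord i) f, cubeE]

lemma cubeE_comp_add_sign_mul {i : Fin n} (hf : ∀ x, f (flipCoord i x) = f x)
    (hg : ∀ x, g (flipCoord i x) = g x) (φ : ℝ → ℝ) :
    (cubeE n fun x => φ (f x + cubeSign (x i) * g x)) =
      cubeE n fun x => (φ (f x + g x) + φ (f x - g x)) / 2 := by
  set F : (Fin n → Bool) → ℝ := fun x => φ (f x + cubeSign (x i) * g x) with hF
  have hpair (x : Fin n → Bool) : F x + F (flipCoord i x) = φ (f x + g x) + φ (f x - g x) := by
    simp only [hF, hf, hg, flipCoord_apply_self]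
    cases x i <;> simp [cubeSign, ← sub_eq_add_neg, add_comm]
  calc cubeE n F = 2⁻¹ * (cubeE n F + cubeE n fun x => F (flipCoord i x)) := by
        rw [cubeE_comp_flipCoord]; ring
    _ = cubeE n fun x => (φ (f x + g x) + φ (f x - g x)) / 2 := by
        rw [← cubeE_add, ← cubeE_const_mul]
        simp only [hpair, inv_mul_eq_div]

end Expectation

section LpNorm

variable {n : ℕ} {p q : ℝ}

/-- The `L^p` norm of `f(X)` for `X` uniform on the cube, intended for `p > 0`; at `p = 0` it
takes the junk value `1`. -/
noncomputable def cubeLpNorm (p : ℝ) (f : (Fin n → Bool) → ℝ) : ℝ :=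
  (cubeE n fun x => |f x| ^ p) ^ (1 / p)

lemma cubeE_abs_rpow_nonneg (p : ℝ) (f : (Fin n → Bool) → ℝ) :
    0 ≤ cubeE n fun x => |f x| ^ p :=
  cubeE_nonneg fun x => by positivity

lemma cubeLpNorm_const (hp : p ≠ 0) (c : ℝ) :
    cubeLpNorm p (fun _ : Fin n → Bool => c) = |c| := by
  rw [cubeLpNorm, cubeE_const, one_div, Real.rpow_rpow_inv (abs_nonneg c) hp]

lemma cubeLpNorm_const_mul (hp : p ≠ 0) (c : ℝ) (f : (Fin n → Bool) → ℝ) :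
    cubeLpNorm p (fun x => c * f x) = |c| * cubeLpNorm p f := by
  simp only [cubeLpNorm, abs_mul, Real.mul_rpow (abs_nonneg _) (abs_nonneg _), cubeE_const_mul]
  rw [Real.mul_rpow (by positivity) (cubeE_abs_rpow_nonneg p f), one_div,
    Real.rpow_rpow_inv (abs_nonneg c) hp]

lemma cubeLpNorm_add_le (hp : 1 ≤ p) (f g : (Fin n → Bool) → ℝ) :
    cubeLpNorm p (fun x => f x + g x) ≤ cubeLpNorm p f + cubeLpNorm p g := by
  have cubeLpNorm_eq (h : (Fin n → Bool) → ℝ) :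
      cubeLpNorm p h = (∑ x, |h x| ^ p) ^ (1 / p) / (2 ^ n) ^ (1 / p) :=
    Real.div_rpow (Finset.sum_nonneg fun x _ => by positivity) (by positivity) _
  simp only [cubeLpNorm_eq, ← add_div]
  gcongr
  exact Real.Lp_add_le Finset.univ f g hp

lemma cubeLpNorm_half_sq (p : ℝ) (f : (Fin n → Bool) → ℝ) :
    cubeLpNorm (p / 2) (fun x => f x ^ 2) = cubeLpNorm p f ^ 2 := by
  simp only [cubeLpNorm, abs_sq, sq_rpow_div_two]
  rw [← Real.rpow_mul_natCast (cubeE_abs_rpow_nonneg p f)]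
  congr 1
  push_cast
  field_simp

theorem cubeLpNorm_add_sign_mul_sq_le (hq : 2 ≤ q) {i : Fin n} {f g : (Fin n → Bool) → ℝ}
    (hf : ∀ x, f (flipCoord i x) = f x) (hg : ∀ x, g (flipCoord i x) = g x) :
    cubeLpNorm q (fun x => f x + cubeSign (x i) * g x) ^ 2 ≤
      cubeLpNorm q f ^ 2 + (q - 1) * cubeLpNorm q g ^ 2 := by
  have hq1 : 0 ≤ q - 1 := by linarith
  have hmoment : (cubeE n fun x => |(f x + cubeSign (x i) * g x) ^ 2| ^ (q / 2)) ≤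
      cubeE n fun x => |f x ^ 2 + (q - 1) * g x ^ 2| ^ (q / 2) := by
    simp only [abs_sq, sq_rpow_div_two]
    rw [cubeE_comp_add_sign_mul hf hg fun t => |t| ^ q]
    refine cubeE_mono fun x => ?_
    rw [abs_of_nonneg (a := f x ^ 2 + _) (by positivity)]
    exact abs_add_rpow_add_abs_sub_rpow_le hq _ _
  calc cubeLpNorm q (fun x => f x + cubeSign (x i) * g x) ^ 2
      = cubeLpNorm (q / 2) (fun x => (f x + cubeSign (x i) * g x) ^ 2) :=
        (cubeLpNorm_half_sq q _).symm
    _ ≤ cubeLpNorm (q / 2) (fun x => f x ^ 2 + (q - 1) * g x ^ 2) :=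
        Real.rpow_le_rpow (cubeE_abs_rpow_nonneg _ _) hmoment (by positivity)
    _ ≤ cubeLpNorm (q / 2) (fun x => f x ^ 2) +
          cubeLpNorm (q / 2) (fun x => (q - 1) * g x ^ 2) :=
        cubeLpNorm_add_le (by linarith) _ _
    _ = cubeLpNorm q f ^ 2 + (q - 1) * cubeLpNorm q g ^ 2 := by
        rw [cubeLpNorm_const_mul (by linarith), abs_of_nonneg hq1, cubeLpNorm_half_sq,
          cubeLpNorm_half_sq]

end LpNorm

section Walsh

variable {n : ℕ} {T : Finset (Fin n)} {i : Fin n}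

/-- The multilinear polynomial in the variables `x_i`, `i ∈ T`, with coefficients `a`. Restricting
the variables to `T` is what allows induction on the set of variables. -/
noncomputable def walshSum (T : Finset (Fin n)) (a : Finset (Fin n) → ℝ) (x : Fin n → Bool) : ℝ :=
  ∑ S ∈ T.powerset, a S * ∏ i ∈ S, cubeSign (x i)

lemma walshSum_empty (a : Finset (Fin n) → ℝ) : walshSum ∅ a = fun _ => a ∅ := by
  ext x
  simp [walshSum]

lemma walshSum_insert (hi : i ∉ T) (a : Finset (Fin n) → ℝ) :
    walshSum (insert i T) a = fun x =>
      walshSum T a x + cubeSign (x i) * walshSum T (fun S => a (insert i S)) x := by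
  ext x
  rw [walshSum, Finset.sum_powerset_insert hi, walshSum, walshSum, Finset.mul_sum]
  congr 1
  refine Finset.sum_congr rfl fun S hS => ?_
  rw [Finset.prod_insert (Finset.notMem_of_mem_powerset_of_notMem hS hi), mul_left_comm]

lemma walshSum_flipCoord (hi : i ∉ T) (a : Finset (Fin n) → ℝ) (x : Fin n → Bool) :
    walshSum T a (flipCoord i x) = walshSum T a x := by
  refine Finset.sum_congr rfl fun S hS => ?_
  have hiS := Finset.notMem_of_mem_powerset_of_notMem hS hi
  congr 1
  exact Finset.prod_congr rfl fun j hj =>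
    by rw [flipCoord_apply_of_ne (ne_of_mem_of_not_mem hj hiS)]

theorem cubeE_walshSum_sq (T : Finset (Fin n)) (a : Finset (Fin n) → ℝ) :
    (cubeE n fun x => walshSum T a x ^ 2) = ∑ S ∈ T.powerset, a S ^ 2 := by
  induction T using Finset.induction_on generalizing a with
  | empty => simp [walshSum_empty, cubeE_const]
  | insert i T hi ih =>
    rw [walshSum_insert hi, cubeE_comp_add_sign_mul (walshSum_flipCoord hi _)
      (walshSum_flipCoord hi _) (· ^ 2), Finset.sum_powerset_insert hi, ← ih, ← ih, ← cubeE_add]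
    congr! 2
    ring

theorem cubeLpNorm_walshSum_sq_le {q : ℝ} (hq : 2 ≤ q) (T : Finset (Fin n))
    (a : Finset (Fin n) → ℝ) :
    cubeLpNorm q (walshSum T a) ^ 2 ≤ ∑ S ∈ T.powerset, (q - 1) ^ S.card * a S ^ 2 := by
  induction T using Finset.induction_on generalizing a with
  | empty => simp [walshSum_empty, cubeLpNorm_const (by linarith : q ≠ 0)]
  | insert i T hi ih =>
    have hq1 : 0 ≤ q - 1 := by linarith
    set b : Finset (Fin n) → ℝ := fun S => a (insert i S)
    calc cubeLpNorm q (walshSum (insert i T) a) ^ 2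
        ≤ cubeLpNorm q (walshSum T a) ^ 2 + (q - 1) * cubeLpNorm q (walshSum T b) ^ 2 := by
          rw [walshSum_insert hi]
          exact cubeLpNorm_add_sign_mul_sq_le hq (walshSum_flipCoord hi a)
            (walshSum_flipCoord hi b)
      _ ≤ ∑ S ∈ T.powerset, (q - 1) ^ S.card * a S ^ 2 +
            (q - 1) * ∑ S ∈ T.powerset, (q - 1) ^ S.card * b S ^ 2 := by
          gcongr
          exacts [ih a, ih b]
      _ = ∑ S ∈ (insert i T).powerset, (q - 1) ^ S.card * a S ^ 2 := by
          rw [Finset.sum_powerset_insert hi, Finset.mul_sum]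
          congr 1
          refine Finset.sum_congr rfl fun S hS => ?_
          rw [Finset.card_insert_of_notMem (Finset.notMem_of_mem_powerset_of_notMem hS hi),
            pow_succ' (q - 1), mul_assoc]

lemma IsPolyDeg.cubeLpNorm_sq_le {d : ℕ} {P : (Fin n → Bool) → ℝ} (hP : IsPolyDeg n d P) {q : ℝ}
    (hq : 2 ≤ q) : cubeLpNorm q P ^ 2 ≤ (q - 1) ^ d * cubeE n fun x => P x ^ 2 := by
  obtain ⟨a, ha, hPa⟩ := hP
  obtain rfl : P = walshSum Finset.univ a := by
    ext x
    rw [hPa, walshSum, Finset.powerset_univ]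
  refine (cubeLpNorm_walshSum_sq_le hq Finset.univ a).trans ?_
  rw [cubeE_walshSum_sq, Finset.mul_sum]
  refine Finset.sum_le_sum fun S _ => ?_
  rcases lt_or_ge d S.card with hS | hS
  · simp [ha S hS]
  · gcongr
    linarith

end Walsh

theorem moment_bound_general {n d : ℕ} {P : (Fin n → Bool) → ℝ} (hP : IsPolyDeg n d P) {q : ℝ}
    (hq : 2 ≤ q) :
    (cubeE n fun x => |P x| ^ q) ^ (1 / q) ≤
      (q - 1) ^ ((d : ℝ) / 2) * Real.sqrt (cubeE n fun x => (P x) ^ 2) := by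
  have hq1 : 0 ≤ q - 1 := by linarith
  calc cubeLpNorm q P ≤ √((q - 1) ^ d * cubeE n fun x => P x ^ 2) :=
        Real.le_sqrt_of_sq_le (hP.cubeLpNorm_sq_le hq)
    _ = (q - 1) ^ ((d : ℝ) / 2) * √(cubeE n fun x => P x ^ 2) := by
        rw [Real.sqrt_mul (by positivity), Real.sqrt_eq_rpow ((q - 1) ^ d),
          ← Real.rpow_natCast_mul hq1, mul_one_div]

/-- Hypercontractive moment bound: `‖P(X)‖_q ≤ √2 q^{d/2} ‖P(X)‖₂` for `q ≥ 3`. -/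
theorem moment_bound (n d : ℕ) (hn : 1 ≤ n) (hd : 1 ≤ d)
    (P : (Fin n → Bool) → ℝ) (hP : IsPolyDeg n d P) :
    ∀ q : ℝ, 3 ≤ q →
      (cubeE n fun x => |P x| ^ q) ^ (1 / q) ≤
        Real.sqrt 2 * q ^ ((d : ℝ) / 2) *
          Real.sqrt (cubeE n fun x => (P x) ^ 2) := by
  intro q hq
  have hconst : (q - 1) ^ ((d : ℝ) / 2) ≤ √2 * q ^ ((d : ℝ) / 2) :=
    (Real.rpow_le_rpow (by linarith) (by linarith) (by positivity)).trans
      (le_mul_of_one_le_left (by positivity) (Real.one_le_sqrt.2 one_le_two))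
  exact (moment_bound_general hP (by linarith)).trans (by gcongr)
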